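/- The is a bijection between the set of ideals of finite index in the Heisenberg Lie algebra L_p over Z_p, up to the action of Aut(L_p), and the set of 5-tuples (e1, e2, e3, e4, e5) ∈ ℕ_0^5 with e4 ≤ e3, e5 ≤ e3, e5 ≤ e4 ≤ e5 + e1; under this bijection an ideal with invariants (e1,...,e5) has index p^{e1 + 2e2 + 3e3}. -/

import Mathlib

/-!
Every ideal of the Heisenberg algebra is, up to an automorphism, spanned by `a x + s z`, `b y + t z`
and `c z` with `c ∣ b ∣ a`. Automorphisms preserving this shape act on the row `(s, t)`, which only
matters modulo `c`, by matrices `!![f, g; k * h, i]` of unit determinant, where `k = a / b`. Over a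
discrete valuation ring they reduce `s` and `t` to powers of the uniformizer whose exponents satisfy
the stated inequalities.

The exponents are invariants: those of `c` and `b` are read off from inclusions between the ideal
and the characteristic submodules `r • ⊤` and `centerMod q`, that of `a` then follows from
the index, and those of `t` and `s` are the divisibility of the ideal and of its part that is
central modulo `a`.
-/

/-- Heisenberg Lie bracket over ℤ_[p] in coordinates w.r.t. (x,y,z), [x,y] = z. -/
noncomputable def hbr {p : ℕ} [Fact p.Prime] (u v : Fin 3 → ℤ_[p]) : Fin 3 → ℤ_[p] :=
  fun i => if i = 2 then u 0 * v 1 - u 1 * v 0 else 0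

namespace Heisenberg

open scoped Pointwise

section Automorphisms

variable {R : Type*} [CommRing R]

/-- The Lie bracket `[x, y] = z` on `R ^ 3` in the basis `(x, y, z)`. -/
def bracket (u v : Fin 3 → R) : Fin 3 → R :=
  fun i => if i = 2 then u 0 * v 1 - u 1 * v 0 else 0

theorem bracket_eq (u v : Fin 3 → R) : bracket u v = ![0, 0, u 0 * v 1 - u 1 * v 0] := by
  ext i; fin_cases i <;> simp [bracket]

/-- Lie ideals of the Heisenberg algebra over `R`; by antisymmetry of the bracket, closure under
brackets on one side suffices. -/
def IsIdeal (I : Submodule R (Fin 3 → R)) : Prop :=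
  ∀ u v : Fin 3 → R, v ∈ I → bracket u v ∈ I

variable (R) in
/-- The automorphism group of the Heisenberg Lie algebra over `R`. -/
def aut : Subgroup ((Fin 3 → R) ≃ₗ[R] (Fin 3 → R)) where
  carrier := {φ | ∀ u v, φ (bracket u v) = bracket (φ u) (φ v)}
  one_mem' _ _ := rfl
  mul_mem' {φ ψ} hφ hψ u v := (congrArg φ (hψ u v)).trans (hφ _ _)
  inv_mem' {φ} hφ u v := φ.injective <| by
    rw [hφ, LinearEquiv.coe_inv, φ.apply_symm_apply, φ.apply_symm_apply, φ.apply_symm_apply]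

theorem mem_aut {φ : (Fin 3 → R) ≃ₗ[R] (Fin 3 → R)} :
    φ ∈ aut R ↔ ∀ u v, φ (bracket u v) = bracket (φ u) (φ v) := Iff.rfl

theorem symm_mem_aut {φ : (Fin 3 → R) ≃ₗ[R] (Fin 3 → R)} (hφ : φ ∈ aut R) : φ.symm ∈ aut R :=
  inv_mem hφ

/-- Two submodules are equivalent if they lie in the same orbit of the automorphism group. -/
def Equivalent (I J : Submodule R (Fin 3 → R)) : Prop :=
  ∃ φ ∈ aut R, I.map (φ : (Fin 3 → R) →ₗ[R] (Fin 3 → R)) = J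

namespace Equivalent

variable {I J K : Submodule R (Fin 3 → R)}

theorem refl (I : Submodule R (Fin 3 → R)) : Equivalent I I :=
  ⟨1, one_mem _, Submodule.map_id I⟩

theorem symm : Equivalent I J → Equivalent J I := fun ⟨φ, hφ, h⟩ =>
  ⟨φ.symm, symm_mem_aut hφ, (Submodule.map_symm_eq_iff φ).2 h⟩

theorem trans : Equivalent I J → Equivalent J K → Equivalent I K := by
  rintro ⟨φ, hφ, rfl⟩ ⟨ψ, hψ, rfl⟩
  exact ⟨ψ * φ, mul_mem hψ hφ, Submodule.map_comp _ _ I⟩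

theorem isIdeal (h : Equivalent I J) (hI : IsIdeal I) : IsIdeal J := by
  obtain ⟨φ, hφ, rfl⟩ := h
  rintro u _ ⟨v, hv, rfl⟩
  refine ⟨bracket (φ.symm u) v, hI _ _ hv, ?_⟩
  simp [mem_aut.1 hφ]

theorem natCard_quotient (h : Equivalent I J) :
    Nat.card ((Fin 3 → R) ⧸ I) = Nat.card ((Fin 3 → R) ⧸ J) := by
  obtain ⟨φ, -, hIJ⟩ := h
  exact Nat.card_congr (Submodule.Quotient.equiv I J φ hIJ).toEquiv

end Equivalent

theorem exists_mem_aut_apply {a b c d : R} (h : IsUnit (a * d - b * c)) :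
    ∃ φ ∈ aut R, ∀ v, φ v = ![a * v 0 + b * v 1, c * v 0 + d * v 1, (a * d - b * c) * v 2] := by
  have hdet : IsUnit (!![a, b, 0; c, d, 0; 0, 0, a * d - b * c]).det := by
    convert h.mul h using 1
    simp [Matrix.det_fin_three]
    ring
  have toLinearEquiv_apply (v : Fin 3 → R) : Matrix.toLinearEquiv (Pi.basisFun R (Fin 3)) _ hdet v =
      ![a * v 0 + b * v 1, c * v 0 + d * v 1, (a * d - b * c) * v 2] := by
    ext i; fin_cases i <;>
      simp [Matrix.toLin_eq_toLin', Matrix.mulVec, dotProduct, Fin.sum_univ_three]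
  refine ⟨_, fun u v => ?_, toLinearEquiv_apply⟩
  simp only [toLinearEquiv_apply]
  ext i; fin_cases i <;> simp [bracket]
  ring

end Automorphisms

section Characteristic

variable {R : Type*} [CommRing R]

/-- A submodule of the Heisenberg algebra stable under all automorphisms: its inclusion relations
with a submodule `I` are invariants of the orbit of `I`. -/
def IsCharacteristic (N : Submodule R (Fin 3 → R)) : Prop :=
  ∀ φ ∈ aut R, N.map (φ : (Fin 3 → R) →ₗ[R] (Fin 3 → R)) = N

theorem IsCharacteristic.inf {N N' : Submodule R (Fin 3 → R)} (hN : IsCharacteristic N)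
    (hN' : IsCharacteristic N') : IsCharacteristic (N ⊓ N') := fun φ hφ => by
  rw [Submodule.map_inf _ φ.injective, hN φ hφ, hN' φ hφ]

theorem isCharacteristic_smul_top (r : R) :
    IsCharacteristic (r • (⊤ : Submodule R (Fin 3 → R))) := fun φ _ => by
  rw [Submodule.map_pointwise_smul, Submodule.map_top, φ.range]

theorem mem_smul_top {r : R} {v : Fin 3 → R} :
    v ∈ r • (⊤ : Submodule R (Fin 3 → R)) ↔ ∀ i, r ∣ v i := by
  simp only [Submodule.mem_smul_pointwise_iff_exists, Submodule.mem_top, true_and, dvd_def,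
    Classical.skolem, funext_iff, Pi.smul_apply, smul_eq_mul, eq_comm]

/-- The elements whose brackets are all divisible by `q`, that is, those central modulo `q`; for
`q = 0` this is the center. -/
def centerMod (q : R) : Submodule R (Fin 3 → R) where
  carrier := {v | ∀ u, bracket u v ∈ q • (⊤ : Submodule R (Fin 3 → R))}
  zero_mem' u := by
    convert Submodule.zero_mem (q • (⊤ : Submodule R (Fin 3 → R))) using 1
    ext i; fin_cases i <;> simp [bracket]
  add_mem' {v w} hv hw u := by
    convert add_mem (hv u) (hw u) using 1
    ext i; fin_cases i <;> simp [bracket]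
    ring
  smul_mem' r v hv u := by
    convert Submodule.smul_mem _ r (hv u) using 1
    ext i; fin_cases i <;> simp [bracket]
    ring

theorem mem_centerMod {q : R} {v : Fin 3 → R} : v ∈ centerMod q ↔ q ∣ v 0 ∧ q ∣ v 1 := by
  have bracket_mem (u : Fin 3 → R) : bracket u v ∈ q • (⊤ : Submodule R (Fin 3 → R)) ↔
      q ∣ u 0 * v 1 - u 1 * v 0 := by
    simp [mem_smul_top, bracket_eq, Fin.forall_fin_succ]
  change (∀ u, bracket u v ∈ _) ↔ _
  simp only [bracket_mem]
  refine ⟨fun h => ⟨?_, ?_⟩, fun h u => dvd_sub (h.2.mul_left _) (h.1.mul_left _)⟩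
  · simpa using h ![0, 1, 0]
  · simpa using h ![1, 0, 0]

theorem isCharacteristic_centerMod (q : R) : IsCharacteristic (centerMod q) := by
  have map_le : ∀ φ ∈ aut R,
      (centerMod q).map (φ : (Fin 3 → R) →ₗ[R] (Fin 3 → R)) ≤ centerMod q := by
    rintro φ hφ _ ⟨v, hv, rfl⟩ u
    rw [← isCharacteristic_smul_top q φ hφ]
    exact ⟨_, hv (φ.symm u), by simp [mem_aut.1 hφ]⟩
  exact fun φ hφ => (map_le φ hφ).antisymm fun v hv =>
    ⟨φ.symm v, map_le _ (symm_mem_aut hφ) ⟨v, hv, rfl⟩, φ.apply_symm_apply v⟩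

namespace Equivalent

variable {I J N : Submodule R (Fin 3 → R)}

theorem inf (h : Equivalent I J) (hN : IsCharacteristic N) : Equivalent (I ⊓ N) (J ⊓ N) := by
  obtain ⟨φ, hφ, rfl⟩ := h
  exact ⟨φ, hφ, by rw [Submodule.map_inf _ φ.injective, hN φ hφ]⟩

theorem le_characteristic_iff (h : Equivalent I J) (hN : IsCharacteristic N) :
    I ≤ N ↔ J ≤ N := by
  obtain ⟨φ, hφ, rfl⟩ := h
  conv_rhs => rw [← hN φ hφ]
  exact (Submodule.map_le_map_iff_of_injective φ.injective _ _).symm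

theorem characteristic_le_iff (h : Equivalent I J) (hN : IsCharacteristic N) :
    N ≤ I ↔ N ≤ J := by
  obtain ⟨φ, hφ, rfl⟩ := h
  conv_rhs => rw [← hN φ hφ]
  exact (Submodule.map_le_map_iff_of_injective φ.injective _ _).symm

end Equivalent

end Characteristic

section Triangular

variable {R : Type*} [CommRing R] {a b c s t : R}

/-- The submodule spanned by `a x + s z`, `b y + t z` and `c z`: the shape to which every ideal is
brought by an automorphism. -/
def triangular (a b c s t : R) : Submodule R (Fin 3 → R) :=
  Submodule.span R {![a, 0, s], ![0, b, t], ![0, 0, c]}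

theorem mem_triangular {v : Fin 3 → R} : v ∈ triangular a b c s t ↔
    ∃ w : Fin 3 → R, ![a * w 0, b * w 1, s * w 0 + t * w 1 + c * w 2] = v := by
  simp [triangular, Submodule.mem_span_triple, Fin.exists_fin_succ_pi, mul_comm]

theorem isIdeal_triangular (hca : c ∣ a) (hcb : c ∣ b) : IsIdeal (triangular a b c s t) := by
  intro u v hv
  obtain ⟨w, rfl⟩ := mem_triangular.1 hv
  obtain ⟨k, rfl⟩ := hca
  obtain ⟨l, rfl⟩ := hcb
  refine mem_triangular.2 ⟨![0, 0, u 0 * (l * w 1) - u 1 * (k * w 0)], ?_⟩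
  ext i; fin_cases i <;> simp [bracket]
  ring

theorem triangular_eq_of_dvd_sub {s' t' : R} (hs : c ∣ s - s') (ht : c ∣ t - t') :
    triangular a b c s t = triangular a b c s' t' := by
  have le_of_dvd_sub {s t s' t' : R} (hs : c ∣ s - s') (ht : c ∣ t - t') :
      triangular a b c s t ≤ triangular a b c s' t' := by
    intro v hv
    obtain ⟨w, rfl⟩ := mem_triangular.1 hv
    obtain ⟨k, hk⟩ := hs
    obtain ⟨l, hl⟩ := ht
    refine mem_triangular.2 ⟨![w 0, w 1, w 2 + k * w 0 + l * w 1], ?_⟩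
    ext i; fin_cases i <;> simp
    linear_combination -w 0 * hk - w 1 * hl
  exact (le_of_dvd_sub hs ht).antisymm
    (le_of_dvd_sub ((dvd_sub_comm).1 hs) ((dvd_sub_comm).1 ht))

theorem exists_triangular_eq_of_associated {a' b' c' : R} (ha : Associated a a')
    (hb : Associated b b') (hc : Associated c c') (s t : R) :
    ∃ s' t', triangular a b c s t = triangular a' b' c' s' t' := by
  obtain ⟨u, rfl⟩ := ha
  obtain ⟨v, rfl⟩ := hb
  obtain ⟨w, rfl⟩ := hc
  refine ⟨s * u, t * v, ?_⟩
  ext x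
  simp only [mem_triangular]
  constructor
  · rintro ⟨y, rfl⟩
    refine ⟨![↑u⁻¹ * y 0, ↑v⁻¹ * y 1, ↑w⁻¹ * y 2], ?_⟩
    simp [mul_assoc]
  · rintro ⟨y, rfl⟩
    refine ⟨![u * y 0, v * y 1, w * y 2], ?_⟩
    simp [mul_assoc]

/- With `D = diag(a, b)`, an automorphism `A ∈ GL₂` such that `A D = D B` with `B ∈ GL₂` turns the
row vector `(s, t)` into `det A • (s, t) B⁻¹ = (s, t) adj(B)`; here `adj(B)` is
`!![f, g; k * h, i]`. -/
theorem equivalent_triangular {k f g h i : R} (hab : a = b * k)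
    (hdet : IsUnit (f * i - k * g * h)) :
    Equivalent (triangular a b c s t)
      (triangular a b c (f * s + k * h * t) (g * s + i * t)) := by
  subst hab
  obtain ⟨φ, hφ, φ_apply⟩ :=
    exists_mem_aut_apply (a := i) (b := -(k * g)) (c := -h) (d := f) (by convert hdet using 1; ring)
  obtain ⟨ψ, -, ψ_apply⟩ :=
    exists_mem_aut_apply (a := i) (b := -g) (c := -(k * h)) (d := f) (by convert hdet using 1; ring)
  refine ⟨φ, hφ, ?_⟩
  ext v
  simp only [Submodule.mem_map, mem_triangular, LinearEquiv.coe_coe, exists_exists_eq_and]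
  refine Iff.trans (exists_congr fun w => ?_) ψ.surjective.exists.symm
  refine Eq.congr_left ?_
  rw [φ_apply, ψ_apply]
  ext j; fin_cases j <;> simp <;> ring

theorem equivalent_triangular_of_dvd_left (hba : b ∣ a) (hst : s ∣ t) :
    Equivalent (triangular a b c s t) (triangular a b c s s) := by
  obtain ⟨k, hk⟩ := hba
  obtain ⟨l, rfl⟩ := hst
  have hequiv := equivalent_triangular (c := c) (s := s) (t := s * l) (f := 1) (g := 1 - l) (h := 0)
    (i := 1) hk (by simp)
  convert hequiv using 2 <;> ring

theorem equivalent_triangular_of_mul_dvd {k : R} (hab : a = b * k) (hts : k * t ∣ s) :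
    Equivalent (triangular a b c s t) (triangular a b c (k * t) t) := by
  obtain ⟨l, rfl⟩ := hts
  have hequiv := equivalent_triangular (c := c) (s := k * t * l) (t := t) (f := 1) (g := 0)
    (h := 1 - l) (i := 1) hab (by simp)
  convert hequiv using 2 <;> ring

theorem equivalent_triangular_units_mul (hba : b ∣ a) (u v : Rˣ) :
    Equivalent (triangular a b c s t) (triangular a b c (u * s) (v * t)) := by
  obtain ⟨k, hk⟩ := hba
  have hequiv := equivalent_triangular (c := c) (s := s) (t := t) (f := u) (g := 0) (h := 0)
    (i := v) hk (by simp)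
  convert hequiv using 2 <;> ring

theorem triangular_le_smul_top {r : R} : triangular a b c s t ≤ r • ⊤ ↔
    (r ∣ a ∧ r ∣ s) ∧ (r ∣ b ∧ r ∣ t) ∧ r ∣ c := by
  simp only [triangular, Submodule.span_le, Set.insert_subset_iff, Set.singleton_subset_iff,
    SetLike.mem_coe, mem_smul_top]
  simp [Fin.forall_fin_succ]

theorem triangular_le_centerMod {q : R} : triangular a b c s t ≤ centerMod q ↔ q ∣ a ∧ q ∣ b := by
  simp [triangular, Submodule.span_le, Set.insert_subset_iff, mem_centerMod]

theorem center_inf_smul_top_le_triangular [IsDomain R] (ha : a ≠ 0) (hb : b ≠ 0) {r : R} :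
    centerMod 0 ⊓ r • ⊤ ≤ triangular a b c s t ↔ c ∣ r := by
  constructor
  · intro h
    have hr : ![0, 0, r] ∈ centerMod 0 ⊓ r • (⊤ : Submodule R (Fin 3 → R)) := by
      simp [mem_centerMod, mem_smul_top, Fin.forall_fin_succ]
    obtain ⟨w, hw⟩ := mem_triangular.1 (h hr)
    obtain ⟨h0, h1, h2⟩ : w 0 = 0 ∧ w 1 = 0 ∧ s * w 0 + t * w 1 + c * w 2 = r := by
      simpa [ha, hb] using hw
    exact ⟨w 2, by simpa [h0, h1] using h2.symm⟩
  · rintro ⟨k, rfl⟩ v ⟨hv, hv'⟩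
    obtain ⟨h0, h1⟩ : v 0 = 0 ∧ v 1 = 0 := by simpa [mem_centerMod] using hv
    obtain ⟨l, hl⟩ := mem_smul_top.1 hv' 2
    refine mem_triangular.2 ⟨![0, 0, k * l], ?_⟩
    ext i; fin_cases i <;> simp [h0, h1, hl, mul_assoc]

theorem triangular_inf_centerMod [IsDomain R] {k : R} (hab : a = b * k) (hb : b ≠ 0) :
    triangular a b c s t ⊓ centerMod a = triangular a a c s (k * t) := by
  subst hab
  ext v
  rw [Submodule.mem_inf, mem_centerMod]
  constructor
  · rintro ⟨hv, -, h1⟩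
    obtain ⟨w, rfl⟩ := mem_triangular.1 hv
    obtain ⟨l, hl⟩ : k ∣ w 1 := (mul_dvd_mul_iff_left hb).1 h1
    refine mem_triangular.2 ⟨![w 0, l, w 2], ?_⟩
    ext i; fin_cases i <;> simp [hl] <;> ring
  · intro hv
    obtain ⟨w, rfl⟩ := mem_triangular.1 hv
    refine ⟨mem_triangular.2 ⟨![w 0, k * w 1, w 2], ?_⟩, ?_⟩
    · ext i; fin_cases i <;> simp <;> ring
    · simp

end Triangular

section Index

variable {R : Type*} [CommRing R]

theorem index_pi_span_singleton {ι : Type*} [Fintype ι] (d : ι → R) :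
    (Submodule.pi Set.univ fun i => Ideal.span {d i}).toAddSubgroup.index =
      ∏ i, Nat.card (R ⧸ Ideal.span {d i}) := by
  classical
  rw [← Nat.card_pi]
  exact Nat.card_congr (Submodule.quotientPi fun i => Ideal.span {d i}).toEquiv

/-- The linear map sending `x`, `y`, `z` to `a x + s z`, `b y + t z`, `z`. It exhibits triangular
submodules as images of coordinatewise ones, whose index is a product. -/
def lowerTriangular (a b s t : R) : (Fin 3 → R) →ₗ[R] (Fin 3 → R) :=
  Matrix.mulVecLin !![a, 0, 0; 0, b, 0; s, t, 1]

theorem lowerTriangular_apply (a b s t : R) (v : Fin 3 → R) :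
    lowerTriangular a b s t v = ![a * v 0, b * v 1, s * v 0 + t * v 1 + v 2] := by
  ext i; fin_cases i <;> simp [lowerTriangular, Matrix.mulVec, dotProduct, Fin.sum_univ_three]

theorem lowerTriangular_injective [IsDomain R] {a b : R} (ha : a ≠ 0) (hb : b ≠ 0) (s t : R) :
    Function.Injective (lowerTriangular a b s t) := by
  refine (injective_iff_map_eq_zero _).2 fun v hv => ?_
  obtain ⟨h0, h1, h2⟩ : v 0 = 0 ∧ v 1 = 0 ∧ s * v 0 + t * v 1 + v 2 = 0 := by
    simpa [lowerTriangular_apply, ha, hb] using hv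
  ext i; fin_cases i
  · exact h0
  · exact h1
  · simpa [h0, h1] using h2

theorem map_lowerTriangular (a b c s t : R) :
    (Submodule.pi Set.univ fun i => Ideal.span {![1, 1, c] i}).map (lowerTriangular a b s t) =
      triangular a b c s t := by
  ext v
  simp only [mem_triangular, Submodule.mem_map, lowerTriangular_apply, Submodule.mem_pi,
    Ideal.mem_span_singleton, Set.mem_univ, true_imp_iff]
  constructor
  · rintro ⟨w, hw, rfl⟩
    obtain ⟨l, hl⟩ := hw 2
    exact ⟨![w 0, w 1, l], by simp [hl]⟩
  · rintro ⟨w, rfl⟩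
    exact ⟨![w 0, w 1, c * w 2], by simp [Fin.forall_fin_succ], by simp⟩

theorem range_lowerTriangular (a b s t : R) : LinearMap.range (lowerTriangular a b s t) =
    Submodule.pi Set.univ fun i => Ideal.span {![a, b, 1] i} := by
  ext v
  simp only [LinearMap.mem_range, lowerTriangular_apply, Submodule.mem_pi,
    Ideal.mem_span_singleton, Set.mem_univ, true_imp_iff]
  constructor
  · rintro ⟨w, rfl⟩
    simp [Fin.forall_fin_succ]
  · intro hv
    obtain ⟨⟨k, hk⟩, l, hl⟩ := And.intro (hv 0) (hv 1)
    refine ⟨![k, l, v 2 - s * k - t * l], ?_⟩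
    ext i; fin_cases i <;> simp [hk, hl]

theorem natCard_quotient_triangular [IsDomain R] {a b : R} (ha : a ≠ 0) (hb : b ≠ 0) (c s t : R) :
    Nat.card ((Fin 3 → R) ⧸ triangular a b c s t) = Nat.card (R ⧸ Ideal.span {a}) *
      Nat.card (R ⧸ Ideal.span {b}) * Nat.card (R ⧸ Ideal.span {c}) := by
  have index_map := AddSubgroup.index_map_of_injective
    (f := (lowerTriangular a b s t).toAddMonoidHom)
    (Submodule.pi Set.univ fun i => Ideal.span {![1, 1, c] i}).toAddSubgroup
    (lowerTriangular_injective ha hb s t)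
  change (triangular a b c s t).toAddSubgroup.index = _
  rw [← map_lowerTriangular]
  refine index_map.trans ?_
  change _ * (LinearMap.range (lowerTriangular a b s t)).toAddSubgroup.index = _
  rw [range_lowerTriangular, index_pi_span_singleton, index_pi_span_singleton]
  simp only [Fin.prod_univ_three, Matrix.cons_val, Ideal.span_singleton_one, Nat.card_unique]
  ring

end Index

section Triangularization

variable {R : Type*} [CommRing R]

theorem exists_mem_forall_dvd_apply [IsPrincipalIdealRing R] {ι : Type*}
    (I : Submodule R (ι → R)) (i : ι) : ∃ v ∈ I, ∀ w ∈ I, v i ∣ w i := by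
  obtain ⟨g, hg⟩ := (IsPrincipalIdealRing.principal (I.map (LinearMap.proj i))).principal
  obtain ⟨v, hv, rfl⟩ : g ∈ I.map (LinearMap.proj i) := hg ▸ Submodule.mem_span_singleton_self g
  refine ⟨v, hv, fun w hw => Ideal.mem_span_singleton.1 (?_ : w i ∈ Ideal.span {v i})⟩
  exact hg.le (Submodule.mem_map_of_mem hw)

theorem exists_equivalent_le_centerMod [IsPrincipalIdealRing R] [PreValuationRing R]
    (I : Submodule R (Fin 3 → R)) :
    ∃ J, Equivalent I J ∧ ∃ y ∈ J, y 0 = 0 ∧ J ≤ centerMod (y 1) := by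
  suffices ∃ φ ∈ aut R, ∃ y ∈ I, φ y 0 = 0 ∧ I ≤ centerMod (φ y 1) by
    obtain ⟨φ, hφ, y, hy, hy0, hI⟩ := this
    have hIJ : Equivalent I _ := ⟨φ, hφ, rfl⟩
    exact ⟨_, hIJ, φ y, Submodule.mem_map_of_mem hy, hy0,
      (hIJ.le_characteristic_iff (isCharacteristic_centerMod _)).1 hI⟩
  obtain ⟨x, hx, hx_dvd⟩ := exists_mem_forall_dvd_apply I 0
  obtain ⟨y, hy, hy_dvd⟩ := exists_mem_forall_dvd_apply I 1
  rcases ValuationRing.dvd_total (x 0) (y 1) with hxy | hyx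
  · obtain ⟨u, hu⟩ := hxy.trans (hy_dvd x hx)
    obtain ⟨φ, hφ, φ_apply⟩ :=
      exists_mem_aut_apply (R := R) (a := -u) (b := 1) (c := 1) (d := 0) (by simp)
    refine ⟨φ, hφ, x, hx, by simp [φ_apply, hu, mul_comm], fun v hv => mem_centerMod.2 ?_⟩
    simpa [φ_apply] using And.intro (hx_dvd v hv) (hxy.trans (hy_dvd v hv))
  · obtain ⟨u, hu⟩ := hyx.trans (hx_dvd y hy)
    obtain ⟨φ, hφ, φ_apply⟩ :=
      exists_mem_aut_apply (R := R) (a := 1) (b := -u) (c := 0) (d := 1) (by simp)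
    refine ⟨φ, hφ, y, hy, by simp [φ_apply, hu, mul_comm], fun v hv => mem_centerMod.2 ?_⟩
    simpa [φ_apply] using And.intro (hyx.trans (hx_dvd v hv)) (hy_dvd v hv)

theorem IsIdeal.exists_eq_triangular [IsPrincipalIdealRing R] {J : Submodule R (Fin 3 → R)}
    (hJ : IsIdeal J) {y : Fin 3 → R} (hy : y ∈ J) (hy0 : y 0 = 0) (hJy : J ≤ centerMod (y 1)) :
    ∃ a c s t, c ∣ y 1 ∧ y 1 ∣ a ∧ J = triangular a (y 1) c s t := by
  obtain ⟨x, hx, hx_dvd⟩ := exists_mem_forall_dvd_apply J 0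
  obtain ⟨z, ⟨hz, hz_center⟩, hz_dvd⟩ := exists_mem_forall_dvd_apply (J ⊓ centerMod 0) 2
  obtain ⟨hx0, q, hq⟩ := mem_centerMod.1 (hJy hx)
  obtain ⟨hz0, hz1⟩ : z 0 = 0 ∧ z 1 = 0 := by simpa [mem_centerMod] using hz_center
  refine ⟨x 0, z 2, x 2 - q * y 2, y 2, ?_, hx0, le_antisymm (fun v hv => ?_) ?_⟩
  · have hxy : bracket ![1, 0, 0] y ∈ J ⊓ centerMod 0 :=
      ⟨hJ _ _ hy, by simp [mem_centerMod, bracket]⟩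
    simpa [bracket] using hz_dvd _ hxy
  · obtain ⟨k, hk⟩ := hx_dvd v hv
    obtain ⟨l, hl⟩ := (mem_centerMod.1 (hJy hv)).2
    have hr : v - k • x - (l - k * q) • y ∈ J ⊓ centerMod 0 := by
      refine ⟨J.sub_mem (J.sub_mem hv (J.smul_mem _ hx)) (J.smul_mem _ hy), mem_centerMod.2 ?_⟩
      simp only [Pi.sub_apply, Pi.smul_apply, smul_eq_mul, zero_dvd_iff]
      exact ⟨by rw [hk, hy0]; ring, by rw [hl, hq]; ring⟩
    obtain ⟨m, hm⟩ := hz_dvd _ hr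
    simp only [Pi.sub_apply, Pi.smul_apply, smul_eq_mul] at hm
    refine mem_triangular.2 ⟨![k, l, m], ?_⟩
    ext i; fin_cases i <;> simp [hk, hl]
    linear_combination -hm
  · have hxq : ![x 0, 0, x 2 - q * y 2] = x - q • y := by
      ext i; fin_cases i <;> simp [hy0, hq, mul_comm]
    have hy' : ![0, y 1, y 2] = y := by ext i; fin_cases i <;> simp [hy0]
    have hz' : ![0, 0, z 2] = z := by ext i; fin_cases i <;> simp [hz0, hz1]
    simp only [triangular, Submodule.span_le, Set.insert_subset_iff, Set.singleton_subset_iff,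
      SetLike.mem_coe, hxq, hy', hz']
    exact ⟨J.sub_mem hx (J.smul_mem _ hy), hy, hz⟩

theorem IsIdeal.exists_equivalent_triangular [IsPrincipalIdealRing R] [PreValuationRing R]
    {I : Submodule R (Fin 3 → R)} (hI : IsIdeal I) :
    ∃ a b c s t, c ∣ b ∧ b ∣ a ∧ Equivalent I (triangular a b c s t) := by
  obtain ⟨J, hIJ, y, hy, hy0, hJy⟩ := exists_equivalent_le_centerMod I
  obtain ⟨a, c, s, t, hc, ha, rfl⟩ := (hIJ.isIdeal hI).exists_eq_triangular hy hy0 hJy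
  exact ⟨a, y 1, c, s, t, hc, ha, hIJ⟩

theorem ne_zero_of_finite_quotient_triangular [Infinite R] {a b c s t : R}
    [Finite ((Fin 3 → R) ⧸ triangular a b c s t)] : a ≠ 0 := by
  rintro rfl
  obtain ⟨r, r', hne, h⟩ := Finite.exists_ne_map_eq_of_infinite fun r : R =>
    (triangular 0 b c s t).mkQ ![r, 0, 0]
  obtain ⟨w, hw⟩ := mem_triangular.1 ((Submodule.Quotient.eq _).1 h)
  exact hne (by simpa [eq_comm, sub_eq_zero] using congrFun hw 0)

end Triangularization

section NormalForm

/-- The constraints on the invariants `(e₁, …, e₅)` of an ideal, indexed from `0`. -/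
def IsAdmissible (e : Fin 5 → ℕ) : Prop :=
  e 3 ≤ e 2 ∧ e 4 ≤ e 2 ∧ e 4 ≤ e 3 ∧ e 3 ≤ e 4 + e 0

variable {R : Type*} [CommRing R]

/-- The representative ideal with invariants `(e₁, …, e₅)`, for a uniformizer `ϖ`. -/
def normalForm (ϖ : R) (e : Fin 5 → ℕ) : Submodule R (Fin 3 → R) :=
  triangular (ϖ ^ (e 0 + e 1 + e 2)) (ϖ ^ (e 1 + e 2)) (ϖ ^ e 2) (ϖ ^ e 3) (ϖ ^ e 4)

theorem isIdeal_normalForm (ϖ : R) (e : Fin 5 → ℕ) : IsIdeal (normalForm ϖ e) :=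
  isIdeal_triangular (pow_dvd_pow ϖ (by omega)) (pow_dvd_pow ϖ (by omega))

theorem equivalent_triangular_pow_min {a b ϖ : R} {k : ℕ} (hab : a = b * ϖ ^ k) (c : R)
    (m n : ℕ) : Equivalent (triangular a b c (ϖ ^ m) (ϖ ^ n))
      (triangular a b c (ϖ ^ min m (min m n + k)) (ϖ ^ min m n)) := by
  have reduce_right : Equivalent (triangular a b c (ϖ ^ m) (ϖ ^ n))
      (triangular a b c (ϖ ^ m) (ϖ ^ min m n)) := by
    rcases le_total m n with hmn | hnm
    · rw [min_eq_left hmn]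
      exact equivalent_triangular_of_dvd_left (Dvd.intro _ hab.symm) (pow_dvd_pow ϖ hmn)
    · rw [min_eq_right hnm]
      exact Equivalent.refl _
  refine reduce_right.trans ?_
  rcases le_total m (min m n + k) with h | h
  · rw [min_eq_left h]
    exact Equivalent.refl _
  · rw [min_eq_right h, add_comm, pow_add]
    rw [add_comm] at h
    exact equivalent_triangular_of_mul_dvd hab (by rw [← pow_add]; exact pow_dvd_pow ϖ h)

variable [IsDomain R] {ϖ : R} {e e' : Fin 5 → ℕ}

theorem center_inf_smul_top_le_normalForm (hϖ : Irreducible ϖ) {n : ℕ} :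
    centerMod 0 ⊓ ϖ ^ n • ⊤ ≤ normalForm ϖ e ↔ e 2 ≤ n := by
  rw [normalForm, center_inf_smul_top_le_triangular (pow_ne_zero _ hϖ.ne_zero)
    (pow_ne_zero _ hϖ.ne_zero), pow_dvd_pow_iff hϖ.ne_zero hϖ.not_isUnit]

theorem normalForm_le_centerMod (hϖ : Irreducible ϖ) {n : ℕ} :
    normalForm ϖ e ≤ centerMod (ϖ ^ n) ↔ n ≤ e 1 + e 2 := by
  simp only [normalForm, triangular_le_centerMod, pow_dvd_pow_iff hϖ.ne_zero hϖ.not_isUnit]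
  omega

theorem normalForm_le_smul_top (hϖ : Irreducible ϖ) (he : IsAdmissible e) {n : ℕ} :
    normalForm ϖ e ≤ ϖ ^ n • ⊤ ↔ n ≤ e 4 := by
  unfold IsAdmissible at he
  simp only [normalForm, triangular_le_smul_top, pow_dvd_pow_iff hϖ.ne_zero hϖ.not_isUnit]
  omega

theorem normalForm_inf_centerMod_le_smul_top (hϖ : Irreducible ϖ) (he : IsAdmissible e) {n : ℕ} :
    normalForm ϖ e ⊓ centerMod (ϖ ^ (e 0 + e 1 + e 2)) ≤ ϖ ^ n • ⊤ ↔ n ≤ e 3 := by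
  unfold IsAdmissible at he
  have hab : ϖ ^ (e 0 + e 1 + e 2) = ϖ ^ (e 1 + e 2) * ϖ ^ e 0 := by ring
  rw [normalForm, triangular_inf_centerMod hab (pow_ne_zero _ hϖ.ne_zero), ← pow_add]
  simp only [triangular_le_smul_top, pow_dvd_pow_iff hϖ.ne_zero hϖ.not_isUnit]
  omega

end NormalForm

section DiscreteValuationRing

open IsLocalRing (ResidueField)

variable {R : Type*} [CommRing R] [IsDomain R] [IsDiscreteValuationRing R] {ϖ : R}

theorem exists_units_mul_sub_pow (hϖ : Irreducible ϖ) (c : ℕ) (s : R) :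
    ∃ n ≤ c, ∃ u : Rˣ, ϖ ^ c ∣ u * s - ϖ ^ n := by
  by_cases hs : ϖ ^ c ∣ s
  · exact ⟨c, le_rfl, 1, by simpa using hs⟩
  · have hs0 : s ≠ 0 := fun h => hs (h ▸ dvd_zero _)
    obtain ⟨n, u, rfl⟩ := IsDiscreteValuationRing.eq_unit_mul_pow_irreducible hs0 hϖ
    refine ⟨n, le_of_not_ge fun hcn => hs ((pow_dvd_pow ϖ hcn).mul_left _), u⁻¹, ?_⟩
    simp

theorem exists_equivalent_normalForm_of_pow (hϖ : Irreducible ϖ) (k j c : ℕ) (s t : R) :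
    ∃ e, IsAdmissible e ∧
      Equivalent (triangular (ϖ ^ (k + j + c)) (ϖ ^ (j + c)) (ϖ ^ c) s t) (normalForm ϖ e) := by
  obtain ⟨m, hm, u, hu⟩ := exists_units_mul_sub_pow hϖ c s
  obtain ⟨n, hn, v, hv⟩ := exists_units_mul_sub_pow hϖ c t
  have hab : ϖ ^ (k + j + c) = ϖ ^ (j + c) * ϖ ^ k := by ring
  refine ⟨![k, j, c, min m (min m n + k), min m n], ?_, ?_⟩
  · simp only [IsAdmissible, Matrix.cons_val]
    omega
  · refine (equivalent_triangular_units_mul (Dvd.intro _ hab.symm) u v).trans ?_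
    rw [triangular_eq_of_dvd_sub hu hv]
    exact equivalent_triangular_pow_min hab _ m n

theorem infinite_of_isDiscreteValuationRing : Infinite R := by
  refine not_finite_iff_infinite.1 fun _ => IsDiscreteValuationRing.not_isField R ?_
  exact Finite.isField_of_domain R

theorem IsIdeal.exists_equivalent_normalForm (hϖ : Irreducible ϖ) {I : Submodule R (Fin 3 → R)}
    (hI : IsIdeal I) (hfin : Nat.card ((Fin 3 → R) ⧸ I) ≠ 0) :
    ∃ e, IsAdmissible e ∧ Equivalent I (normalForm ϖ e) := by
  have : Infinite R := infinite_of_isDiscreteValuationRing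
  obtain ⟨a, b, c, s, t, hcb, hba, hI⟩ := hI.exists_equivalent_triangular
  have : Finite ((Fin 3 → R) ⧸ triangular a b c s t) :=
    Nat.finite_of_card_ne_zero (hI.natCard_quotient ▸ hfin)
  have ha : a ≠ 0 := ne_zero_of_finite_quotient_triangular (b := b) (c := c) (s := s) (t := t)
  have hb : b ≠ 0 := ne_zero_of_dvd_ne_zero ha hba
  have hc : c ≠ 0 := ne_zero_of_dvd_ne_zero hb hcb
  obtain ⟨α, hα⟩ := IsDiscreteValuationRing.associated_pow_irreducible ha hϖ
  obtain ⟨β, hβ⟩ := IsDiscreteValuationRing.associated_pow_irreducible hb hϖ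
  obtain ⟨γ, hγ⟩ := IsDiscreteValuationRing.associated_pow_irreducible hc hϖ
  have hγβ : γ ≤ β := (pow_dvd_pow_iff hϖ.ne_zero hϖ.not_isUnit).1 <|
    hγ.dvd_iff_dvd_left.1 (hβ.dvd_iff_dvd_right.1 hcb)
  have hβα : β ≤ α := (pow_dvd_pow_iff hϖ.ne_zero hϖ.not_isUnit).1 <|
    hβ.dvd_iff_dvd_left.1 (hα.dvd_iff_dvd_right.1 hba)
  obtain ⟨j, rfl⟩ := Nat.exists_eq_add_of_le' hγβ
  obtain ⟨k, rfl⟩ := Nat.exists_eq_add_of_le' hβα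
  obtain ⟨s', t', hst⟩ := exists_triangular_eq_of_associated hα hβ hγ s t
  rw [hst, ← add_assoc] at hI
  obtain ⟨e, he, h⟩ := exists_equivalent_normalForm_of_pow hϖ k j γ s' t'
  exact ⟨e, he, hI.trans h⟩

theorem natCard_quotient_span_pow (hϖ : Irreducible ϖ) (n : ℕ) :
    Nat.card (R ⧸ Ideal.span {ϖ ^ n}) = Nat.card (ResidueField R) ^ n := by
  rw [← Ideal.span_singleton_pow, ← hϖ.maximalIdeal_eq, ← Submodule.cardQuot_apply,
    cardQuot_pow_of_prime (IsDiscreteValuationRing.not_a_field R)]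
  rfl

theorem natCard_quotient_normalForm (hϖ : Irreducible ϖ) (e : Fin 5 → ℕ) :
    Nat.card ((Fin 3 → R) ⧸ normalForm ϖ e) =
      Nat.card (ResidueField R) ^ (e 0 + 2 * e 1 + 3 * e 2) := by
  rw [normalForm, natCard_quotient_triangular (pow_ne_zero _ hϖ.ne_zero)
    (pow_ne_zero _ hϖ.ne_zero)]
  simp only [natCard_quotient_span_pow hϖ]
  ring

theorem eq_of_equivalent_normalForm [Finite (ResidueField R)] (hϖ : Irreducible ϖ)
    {e e' : Fin 5 → ℕ} (he : IsAdmissible e) (he' : IsAdmissible e')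
    (h : Equivalent (normalForm ϖ e) (normalForm ϖ e')) : e = e' := by
  have h2 : e 2 = e' 2 := eq_of_forall_ge_iff fun n => by
    rw [← center_inf_smul_top_le_normalForm hϖ, ← center_inf_smul_top_le_normalForm hϖ]
    exact h.characteristic_le_iff
      ((isCharacteristic_centerMod 0).inf (isCharacteristic_smul_top _))
  have h12 : e 1 + e 2 = e' 1 + e' 2 := eq_of_forall_le_iff fun n => by
    rw [← normalForm_le_centerMod hϖ, ← normalForm_le_centerMod hϖ]
    exact h.le_characteristic_iff (isCharacteristic_centerMod _)
  have hindex : e 0 + 2 * e 1 + 3 * e 2 = e' 0 + 2 * e' 1 + 3 * e' 2 := by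
    refine Nat.pow_right_injective (Finite.one_lt_card (α := ResidueField R)) ?_
    simpa only [natCard_quotient_normalForm hϖ] using h.natCard_quotient
  have h012 : e 0 + e 1 + e 2 = e' 0 + e' 1 + e' 2 := by omega
  have h3 : e 3 = e' 3 := eq_of_forall_le_iff fun n => by
    rw [← normalForm_inf_centerMod_le_smul_top hϖ he,
      ← normalForm_inf_centerMod_le_smul_top hϖ he', h012]
    exact (h.inf (isCharacteristic_centerMod _)).le_characteristic_iff
      (isCharacteristic_smul_top _)
  have h4 : e 4 = e' 4 := eq_of_forall_le_iff fun n => by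
    rw [← normalForm_le_smul_top hϖ he, ← normalForm_le_smul_top hϖ he']
    exact h.le_characteristic_iff (isCharacteristic_smul_top _)
  ext i
  fin_cases i <;> dsimp <;> omega

end DiscreteValuationRing

end Heisenberg

theorem natCard_residueField_padicInt (p : ℕ) [Fact p.Prime] :
    Nat.card (IsLocalRing.ResidueField ℤ_[p]) = p := by
  rw [Nat.card_congr PadicInt.residueField.toEquiv, Nat.card_zmod]

open Heisenberg in
theorem stmt_16_general (R : Type*) [CommRing R] [IsDomain R] [IsDiscreteValuationRing R]
    [Finite (IsLocalRing.ResidueField R)] :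
    ∃ F : {I : Submodule R (Fin 3 → R) //
            IsIdeal I ∧ Nat.card ((Fin 3 → R) ⧸ I) ≠ 0}
        → {e : Fin 5 → ℕ // IsAdmissible e},
      Function.Surjective F ∧
      (∀ I J, F I = F J ↔ Equivalent I.1 J.1) ∧
      (∀ I, Nat.card ((Fin 3 → R) ⧸ I.1) = Nat.card (IsLocalRing.ResidueField R) ^
        ((F I).1 0 + 2 * (F I).1 1 + 3 * (F I).1 2)) := by
  obtain ⟨ϖ, hϖ⟩ := IsDiscreteValuationRing.exists_irreducible R
  choose f hf hIf using fun I : {I : Submodule R (Fin 3 → R) //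
    IsIdeal I ∧ Nat.card ((Fin 3 → R) ⧸ I) ≠ 0} =>
      I.2.1.exists_equivalent_normalForm hϖ I.2.2
  refine ⟨fun I => ⟨f I, hf I⟩, fun ⟨e, he⟩ => ?_, fun I J => ⟨fun h => ?_, fun h => ?_⟩,
    fun I => ?_⟩
  · have hcard : Nat.card ((Fin 3 → R) ⧸ normalForm ϖ e) ≠ 0 := by
      rw [natCard_quotient_normalForm hϖ]
      exact pow_ne_zero _ Nat.card_pos.ne'
    let I : {I : Submodule R (Fin 3 → R) // IsIdeal I ∧ Nat.card (_ ⧸ I) ≠ 0} :=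
      ⟨_, isIdeal_normalForm ϖ e, hcard⟩
    exact ⟨I, Subtype.ext (eq_of_equivalent_normalForm hϖ he (hf I) (hIf I)).symm⟩
  · have hf_eq : f I = f J := congrArg Subtype.val h
    exact (hIf I).trans (hf_eq ▸ (hIf J).symm)
  · exact Subtype.ext (eq_of_equivalent_normalForm hϖ (hf I) (hf J)
      (((hIf I).symm.trans h).trans (hIf J)))
  · exact (hIf I).natCard_quotient.trans (natCard_quotient_normalForm hϖ _)

/-- there is a bijection between ideals of finite index in the
Heisenberg Lie algebra L_p up to Aut(L_p), and 5-tuples (e1,...,e5) ∈ ℕ₀⁵ with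
e4 ≤ e3, e5 ≤ e3, e5 ≤ e4 ≤ e5 + e1; an ideal with invariants (e1,...,e5)
has index p^{e1+2e2+3e3}.  (Here e 0, ..., e 4 stand for e1, ..., e5.) -/
theorem stmt_16 (p : ℕ) [Fact p.Prime] :
    ∃ F : {I : Submodule ℤ_[p] (Fin 3 → ℤ_[p]) //
            (∀ u v : Fin 3 → ℤ_[p], v ∈ I → hbr u v ∈ I) ∧
            Nat.card ((Fin 3 → ℤ_[p]) ⧸ I) ≠ 0}
        → {e : Fin 5 → ℕ // e 3 ≤ e 2 ∧ e 4 ≤ e 2 ∧ e 4 ≤ e 3 ∧ e 3 ≤ e 4 + e 0},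
      Function.Surjective F ∧
      (∀ I J, F I = F J ↔
        ∃ φ : (Fin 3 → ℤ_[p]) ≃ₗ[ℤ_[p]] (Fin 3 → ℤ_[p]),
          (∀ u v : Fin 3 → ℤ_[p], φ (hbr u v) = hbr (φ u) (φ v)) ∧
          Submodule.map (φ : (Fin 3 → ℤ_[p]) →ₗ[ℤ_[p]] (Fin 3 → ℤ_[p])) I.1 = J.1) ∧
      (∀ I, Nat.card ((Fin 3 → ℤ_[p]) ⧸ I.1)
          = p ^ ((F I).1 0 + 2 * (F I).1 1 + 3 * (F I).1 2)) := by
  have h := stmt_16_general ℤ_[p]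
  rw [natCard_residueField_padicInt] at h
  exact h
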